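/- arXiv:2005.12136 — 4 statements merged into one kernel-verified Lean document; each statement's English description precedes it below -/
import Mathlib

section
/- Let β : ℝ → ℝ be continuous on [0, ∞) with β(0) = 0 and β(s) > 0 for every s > 0, and let v : ℕ → ℝ be a sequence with v(n) ≥ 0 for all n and v(n+1) ≤ v(n) − β(v(n)) for all n. Then v(n) → 0 as n → ∞. -/
open Set Filter

/-!
The recursion makes `v` decrease to some `L ≥ 0`, so its decrements tend to `0`. They dominate
`β (v n)`, so semicontinuity forces `β L ≤ 0`, which positivity of `β` allows only for `L = 0`.
As `v` reaches `L` from above, semicontinuity from the right is all that matters.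
-/

open scoped Topology

theorem le_of_lowerSemicontinuousWithinAt_of_tendsto {ι X γ : Type*} [TopologicalSpace X]
    [TopologicalSpace γ] [LinearOrder γ] [OrderTopology γ] {l : Filter ι} [l.NeBot]
    {f : X → γ} {s : Set X} {a : X} {x : ι → X} {d : ι → γ} {c : γ}
    (hf : LowerSemicontinuousWithinAt f s a) (hx : Tendsto x l (𝓝[s] a))
    (hd : Tendsto d l (𝓝 c)) (hle : ∀ᶠ i in l, f (x i) ≤ d i) : f a ≤ c := by
  by_contra! hlt
  obtain ⟨u, hcu, w, hwf, hsep⟩ := hlt.exists_disjoint_Iio_Ioi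
  have hdu : ∀ᶠ i in l, d i < u := hd.eventually_lt_const hcu
  have hwx : ∀ᶠ i in l, w < f (x i) := hx.eventually (hf w hwf)
  obtain ⟨i, hi, hiu, hiw⟩ := (hle.and (hdu.and hwx)).exists
  exact (hsep (d i) hiu (f (x i)) hiw).not_ge hi

theorem tendsto_sub_succ_zero {G : Type*} [AddGroup G] [TopologicalSpace G] [ContinuousSub G]
    {v : ℕ → G} {a : G} (hv : Tendsto v atTop (𝓝 a)) :
    Tendsto (fun n ↦ v n - v (n + 1)) atTop (𝓝 0) := by
  simpa only [sub_self] using hv.sub ((tendsto_add_atTop_iff_nat 1).2 hv)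

theorem nonpos_of_tendsto_of_succ_le_sub {G : Type*} [AddCommGroup G] [LinearOrder G]
    [IsOrderedAddMonoid G] [TopologicalSpace G] [OrderTopology G] {β : G → G} {s : Set G} {a : G}
    {v : ℕ → G} (hβ : LowerSemicontinuousWithinAt β s a) (hv : Tendsto v atTop (𝓝[s] a))
    (hdec : ∀ n, v (n + 1) ≤ v n - β (v n)) : β a ≤ 0 :=
  le_of_lowerSemicontinuousWithinAt_of_tendsto hβ hv
    (tendsto_sub_succ_zero (tendsto_nhds_of_tendsto_nhdsWithin hv))
    (.of_forall fun n ↦ le_sub_comm.1 (hdec n))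

theorem tendsto_atTop_nhdsGE_ciInf {ι α : Type*} [Preorder ι] [ConditionallyCompleteLattice α]
    [TopologicalSpace α] [InfConvergenceClass α] {f : ι → α} (hf : Antitone f)
    (hbdd : BddBelow (range f)) : Tendsto f atTop (𝓝[≥] ⨅ i, f i) :=
  tendsto_nhdsWithin_iff.2 ⟨tendsto_atTop_ciInf hf hbdd, .of_forall (ciInf_le hbdd)⟩

theorem lyapunov_comparison_sequence_tendsto_zero_general {β : ℝ → ℝ}
    (hβ : ∀ s, 0 < s → LowerSemicontinuousWithinAt β (Ici s) s)
    (hβ0 : 0 ≤ β 0) (hβpos : ∀ s, 0 < s → 0 < β s)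
    {v : ℕ → ℝ} (hv : ∀ n, 0 ≤ v n) (hdec : ∀ n, v (n + 1) ≤ v n - β (v n)) :
    Tendsto v atTop (𝓝 0) := by
  have hβ_nonneg (s : ℝ) (hs : 0 ≤ s) : 0 ≤ β s :=
    hs.eq_or_lt.elim (fun h ↦ h ▸ hβ0) fun h ↦ (hβpos s h).le
  have hanti : Antitone v := antitone_nat_of_succ_le fun n ↦
    (hdec n).trans (sub_le_self _ (hβ_nonneg _ (hv n)))
  have hlim : Tendsto v atTop (𝓝[≥] ⨅ n, v n) :=
    tendsto_atTop_nhdsGE_ciInf hanti ⟨0, forall_mem_range.2 hv⟩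
  have hinf : ⨅ n, v n = 0 := by
    refine (le_ciInf hv).antisymm' (not_lt.1 fun hpos ↦ ?_)
    exact (hβpos _ hpos).not_ge (nonpos_of_tendsto_of_succ_le_sub (hβ _ hpos) hlim hdec)
  exact hinf ▸ tendsto_nhds_of_tendsto_nhdsWithin hlim

/-- Discrete comparison lemma: if `β` is continuous on `[0,∞)`, vanishes at `0`, is positive on
`(0,∞)`, and the nonnegative sequence `v` satisfies `v (n+1) ≤ v n - β (v n)`, then `v n → 0`. -/
theorem lyapunov_comparison_sequence_tendsto_zero
    (β : ℝ → ℝ) (hβc : ContinuousOn β (Ici (0 : ℝ)))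
    (hβ0 : β 0 = 0) (hβpos : ∀ s : ℝ, 0 < s → 0 < β s)
    (v : ℕ → ℝ) (hv : ∀ n, 0 ≤ v n)
    (hdec : ∀ n, v (n + 1) ≤ v n - β (v n)) :
    Tendsto v atTop (nhds 0) :=
  lyapunov_comparison_sequence_tendsto_zero_general
    (fun s hs ↦ ((hβc s hs.le).mono (Ici_subset_Ici.2 hs.le)).lowerSemicontinuousWithinAt)
    hβ0.ge hβpos hv hdec
end

section
/- Let E be a real normed vector space, Y ⊆ E a set, φ : E → E a map with φ(Y) ⊆ Y, x_f ∈ Y, and V : E → ℝ. Let α₁, α₂ : ℝ → ℝ be functions with α_i(0) = 0, continuous and strictly increasing on [0, ∞), and tending to ∞ at ∞, and let α_V : ℝ → ℝ be a function with α_V(0) = 0 that is continuous and strictly increasing on [0, ∞). Assume α₁(‖x − x_f‖) ≤ V(x) ≤ α₂(‖x − x_f‖) for all x ∈ Y, and V(φ(x)) ≤ V(x) − α_V(‖x − x_f‖) for all x ∈ Y. Then for every x₀ ∈ Y the orbit converges to x_f: φ^[n](x₀) → x_f as n → ∞. -/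
open Set Filter Function

/-!
Telescoping the decrease condition along an orbit bounds the partial sums of the terms
`α (dist (φ^[n] x₀) x_f)` by the total drop of `V`, which is finite since `V` is bounded below.
Hence these terms tend to zero, and a monotone `α` that is positive on `(0, ∞)` can be small only
at small distances.
-/

theorem summable_of_nonneg_of_le_sub_succ {v w : ℕ → ℝ} (hv : BddBelow (range v))
    (hw : ∀ n, 0 ≤ w n) (hvw : ∀ n, w n ≤ v n - v (n + 1)) : Summable w := by
  obtain ⟨b, hb⟩ := hv
  refine summable_of_sum_range_le (c := v 0 - b) hw fun n => ?_
  calc ∑ i ∈ Finset.range n, w i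
      ≤ ∑ i ∈ Finset.range n, (v i - v (i + 1)) := Finset.sum_le_sum fun i _ => hvw i
    _ = v 0 - v n := Finset.sum_range_sub' v n
    _ ≤ v 0 - b := sub_le_sub_left (hb (mem_range_self n)) _

theorem nonneg_of_monotoneOn_Ici {R S : Type*} [Preorder R] [Zero R] [Preorder S] [Zero S]
    {α : R → S} (hα₀ : 0 ≤ α 0) (hα : MonotoneOn α (Ici 0)) {t : R} (ht : 0 ≤ t) : 0 ≤ α t :=
  hα₀.trans (hα self_mem_Ici ht ht)

theorem tendsto_zero_of_tendsto_comp_zero {ι R S : Type*}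
    [LinearOrder R] [Zero R] [TopologicalSpace R] [OrderTopology R]
    [LinearOrder S] [Zero S] [TopologicalSpace S] [ClosedIciTopology S]
    {α : R → S} {l : Filter ι} {u : ι → R} (hα : MonotoneOn α (Ici 0))
    (hα_pos : ∀ t > 0, 0 < α t) (hu : ∀ i, 0 ≤ u i)
    (h : Tendsto (fun i => α (u i)) l (nhds 0)) : Tendsto u l (nhds 0) := by
  refine tendsto_order.2 ⟨fun a ha => .of_forall fun i => ha.trans_le (hu i), fun ε hε => ?_⟩
  filter_upwards [h.eventually_lt_const (hα_pos ε hε)] with i hi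
  exact hα.reflect_lt (hu i) hε.le hi

theorem lyapunov_orbit_tendsto_general {X : Type*} [PseudoMetricSpace X] {Y : Set X} {φ : X → X}
    (hφ : MapsTo φ Y Y) {x_f : X} {V : X → ℝ} (hV : BddBelow (V '' Y)) {α : ℝ → ℝ}
    (hα₀ : 0 ≤ α 0) (hα : MonotoneOn α (Ici 0)) (hα_pos : ∀ t > 0, 0 < α t)
    (hdec : ∀ x ∈ Y, V (φ x) ≤ V x - α (dist x x_f)) {x₀ : X} (hx₀ : x₀ ∈ Y) :
    Tendsto (fun n => φ^[n] x₀) atTop (nhds x_f) := by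
  have orbit_mem : ∀ n, φ^[n] x₀ ∈ Y := fun n => hφ.iterate n hx₀
  have V_orbit_bddBelow : BddBelow (range fun n => V (φ^[n] x₀)) :=
    hV.mono (range_subset_iff.2 fun n => mem_image_of_mem V (orbit_mem n))
  have decrease_le : ∀ n, α (dist (φ^[n] x₀) x_f) ≤ V (φ^[n] x₀) - V (φ^[n + 1] x₀) := fun n => by
    rw [iterate_succ_apply']
    exact le_sub_comm.1 (hdec _ (orbit_mem n))
  have decrease_summable : Summable fun n => α (dist (φ^[n] x₀) x_f) :=
    summable_of_nonneg_of_le_sub_succ V_orbit_bddBelow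
      (fun _ => nonneg_of_monotoneOn_Ici hα₀ hα dist_nonneg) decrease_le
  exact tendsto_iff_dist_tendsto_zero.2 <|
    tendsto_zero_of_tendsto_comp_zero hα hα_pos (fun _ => dist_nonneg)
      decrease_summable.tendsto_atTop_zero

/-- Attractivity from Lyapunov conditions: the orbit of any `x₀ ∈ Y` converges to `x_f`. -/
theorem lyapunov_orbit_tendsto
    {E : Type*} [NormedAddCommGroup E] [NormedSpace ℝ E]
    (Y : Set E) (φ : E → E) (hφ : Set.MapsTo φ Y Y)
    (x_f : E) (hx_f : x_f ∈ Y) (V : E → ℝ)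
    (α₁ α₂ : ℝ → ℝ)
    (hα₁0 : α₁ 0 = 0) (hα₁c : ContinuousOn α₁ (Ici (0 : ℝ)))
    (hα₁m : StrictMonoOn α₁ (Ici (0 : ℝ)))
    (hα₁top : Tendsto α₁ atTop atTop)
    (hα₂0 : α₂ 0 = 0) (hα₂c : ContinuousOn α₂ (Ici (0 : ℝ)))
    (hα₂m : StrictMonoOn α₂ (Ici (0 : ℝ)))
    (hα₂top : Tendsto α₂ atTop atTop)
    (α_V : ℝ → ℝ) (hαV0 : α_V 0 = 0)
    (hαVc : ContinuousOn α_V (Ici (0 : ℝ)))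
    (hαVm : StrictMonoOn α_V (Ici (0 : ℝ)))
    (hbound : ∀ x ∈ Y, α₁ (‖x - x_f‖) ≤ V x ∧ V x ≤ α₂ (‖x - x_f‖))
    (hdec : ∀ x ∈ Y, V (φ x) ≤ V x - α_V (‖x - x_f‖)) :
    ∀ x₀ ∈ Y, Tendsto (fun n => φ^[n] x₀) atTop (nhds x_f) := by
  have hV : BddBelow (V '' Y) := ⟨0, forall_mem_image.2 fun x hx =>
    (nonneg_of_monotoneOn_Ici hα₁0.ge hα₁m.monotoneOn (norm_nonneg _)).trans (hbound x hx).1⟩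
  have hαV_pos : ∀ t > 0, 0 < α_V t := fun t ht => hαV0 ▸ hαVm self_mem_Ici ht.le ht
  exact fun x₀ hx₀ => lyapunov_orbit_tendsto_general hφ hV hαV0.ge hαVm.monotoneOn hαV_pos
    (by simpa only [dist_eq_norm] using hdec) hx₀
end

section
/- Let E be a real normed vector space, Y ⊆ E a set, φ : E → E a map with φ(Y) ⊆ Y, x_f ∈ Y, V : E → ℝ, r > 0, and α_V : ℝ → ℝ a function with α_V(0) = 0 that is continuous and strictly increasing on [0, ∞). Assume V(x) ≥ 0 for all x ∈ Y, and the decrease condition V(φ(x)) ≤ V(x) − α_V(‖x − x_f‖) holds for every x ∈ Y with ‖x − x_f‖ ≥ r. Then for every x₀ ∈ Y the orbit enters the open ball of radius r around x_f in finite time: there exists n ∈ ℕ with n ≤ V(x₀) / α_V(r) + 1 such that ‖φ^[n](x₀) − x_f‖ < r. -/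
open Set Function

theorem add_nsmul_le_of_forall_succ_add_le {G : Type*} [AddCommMonoid G] [Preorder G]
    [IsOrderedAddMonoid G] {u : ℕ → G} {c : G} {n : ℕ} (h : ∀ k < n, u (k + 1) + c ≤ u k) :
    u n + n • c ≤ u 0 := by
  induction n with
  | zero => simp
  | succ n ih =>
    calc u (n + 1) + (n + 1) • c = u (n + 1) + c + n • c := by rw [succ_nsmul', add_assoc]
      _ ≤ u n + n • c := by gcongr; exact h n n.lt_succ_self
      _ ≤ u 0 := ih fun k hk => h k (hk.trans n.lt_succ_self)

theorem exists_natCast_le_div_of_succ_add_le {K : Type*} [Field K] [LinearOrder K]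
    [IsStrictOrderedRing K] [FloorSemiring K] {u : ℕ → K} {c : K} {p : ℕ → Prop} (hc : 0 < c)
    (hu : ∀ n, 0 ≤ u n) (hstep : ∀ n, ¬p n → u (n + 1) + c ≤ u n) :
    ∃ n : ℕ, (n : K) ≤ u 0 / c ∧ p n := by
  by_contra! hp
  -- All of the first `N` steps decrease `u`, one more than `u 0` can pay for.
  let N := ⌊u 0 / c⌋₊ + 1
  have hdrop : u N + N • c ≤ u 0 := add_nsmul_le_of_forall_succ_add_le fun k hk =>
    hstep k <| hp k <| (Nat.le_floor_iff (div_nonneg (hu 0) hc.le)).1 (Nat.lt_succ_iff.1 hk)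
  have hexceed : u 0 < N • c := by
    rw [nsmul_eq_mul, ← div_lt_iff₀ hc]
    exact Nat.lt_of_floor_lt (Nat.lt_succ_self _)
  exact (hexceed.trans_le (le_add_of_nonneg_left (hu N))).not_ge hdrop

theorem finite_time_reaching_general {X : Type*} [PseudoMetricSpace X] {Y : Set X} {φ : X → X}
    (hφ : MapsTo φ Y Y) {x_f : X} {V : X → ℝ} {r : ℝ} {α : ℝ → ℝ} (hαr : 0 < α r)
    (hα : MonotoneOn α (Ici r)) (hV : ∀ x ∈ Y, 0 ≤ V x)
    (hdec : ∀ x ∈ Y, r ≤ dist x x_f → V (φ x) ≤ V x - α (dist x x_f)) {x₀ : X} (hx₀ : x₀ ∈ Y) :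
    ∃ n : ℕ, (n : ℝ) ≤ V x₀ / α r ∧ dist (φ^[n] x₀) x_f < r := by
  have horbit (n : ℕ) : φ^[n] x₀ ∈ Y := hφ.iterate n hx₀
  refine exists_natCast_le_div_of_succ_add_le (u := fun n => V (φ^[n] x₀)) hαr
    (fun n => hV _ (horbit n)) fun n hn => ?_
  have hfar : r ≤ dist (φ^[n] x₀) x_f := not_lt.1 hn
  have hα_le : α r ≤ α (dist (φ^[n] x₀) x_f) := hα self_mem_Ici hfar hfar
  rw [iterate_succ_apply']
  linarith [hdec _ (horbit n) hfar]

/-- Finite-time reaching: if the Lyapunov decrease holds outside the ball of radius `r`, the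
orbit enters the open ball of radius `r` around `x_f` within `V x₀ / α_V r + 1` steps. -/
theorem finite_time_reaching
    {E : Type*} [NormedAddCommGroup E] [NormedSpace ℝ E]
    (Y : Set E) (φ : E → E) (hφ : Set.MapsTo φ Y Y)
    (x_f : E) (hx_f : x_f ∈ Y) (V : E → ℝ)
    (r : ℝ) (hr : 0 < r)
    (α_V : ℝ → ℝ) (hαV0 : α_V 0 = 0)
    (hαVc : ContinuousOn α_V (Ici (0 : ℝ)))
    (hαVm : StrictMonoOn α_V (Ici (0 : ℝ)))
    (hVnonneg : ∀ x ∈ Y, 0 ≤ V x)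
    (hdec : ∀ x ∈ Y, r ≤ ‖x - x_f‖ → V (φ x) ≤ V x - α_V (‖x - x_f‖)) :
    ∀ x₀ ∈ Y, ∃ n : ℕ, (n : ℝ) ≤ V x₀ / α_V r + 1 ∧ ‖φ^[n] x₀ - x_f‖ < r := by
  simp only [← dist_eq_norm] at hdec ⊢
  have hαr : 0 < α_V r := hαV0 ▸ hαVm self_mem_Ici hr.le hr
  have hα : MonotoneOn α_V (Ici r) := hαVm.monotoneOn.mono (Ici_subset_Ici.2 hr.le)
  exact fun x₀ hx₀ => (finite_time_reaching_general hφ hαr hα hVnonneg hdec hx₀).imp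
    fun _ => And.imp_left fun hn => hn.trans (le_add_of_nonneg_right zero_le_one)
end

section
/- Let E be a real normed vector space, Y ⊆ E a set, φ : E → E a map with φ(Y) ⊆ Y, x_f ∈ Y, V : E → ℝ, r > 0, and α_V : ℝ → ℝ a function with α_V(0) = 0 that is continuous and strictly increasing on [0, ∞). Assume V(x) ≥ 0 for all x ∈ Y, and the decrease condition V(φ(x)) ≤ V(x) − α_V(‖x − x_f‖) holds for every x ∈ Y with ‖x − x_f‖ ≥ r. Then for every x₀ ∈ Y the orbit visits the open ball of radius r around x_f infinitely often: for every N ∈ ℕ there exists n ≥ N with ‖φ^[n](x₀) − x_f‖ < r. -/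
open Set Function

/-!
Outside the ball the monotone function `α` is at least its positive value at the radius, so each
step spent there lowers `V` by a fixed positive amount. As `V` is bounded below on the invariant
set, only finitely many consecutive steps can be spent outside. Restarting from the `N`-th iterate
gives a visit after time `N`.
-/

section LyapunovDecrease

open Filter

variable {M : Type*} [AddCommGroup M] [LinearOrder M] [IsOrderedAddMonoid M] [Archimedean M]
  {c : M}

theorem not_bddBelow_range_of_succ_add_le {u : ℕ → M} (hc : 0 < c)
    (hu : ∀ n, u (n + 1) + c ≤ u n) : ¬BddBelow (range u) := by
  rintro ⟨b, hb⟩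
  have hanti : Antitone fun n ↦ u n + n • c := antitone_nat_of_succ_le fun n ↦
    calc u (n + 1) + (n + 1) • c = u (n + 1) + c + n • c := by rw [succ_nsmul', add_assoc]
      _ ≤ u n + n • c := by gcongr; exact hu n
  obtain ⟨n, hn⟩ := exists_lt_nsmul hc (u 0 - b)
  have hle : b + n • c ≤ u 0 :=
    calc b + n • c ≤ u n + n • c := by gcongr; exact hb (mem_range_self n)
      _ ≤ u 0 + 0 • c := hanti n.zero_le
      _ = u 0 := by rw [zero_nsmul, add_zero]
  exact hn.not_ge (le_sub_iff_add_le'.mpr hle)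

variable {X : Type*} {Y S : Set X} {φ : X → X} {V : X → M} {x : X}

theorem exists_iterate_mem_of_add_le (hφ : MapsTo φ Y Y) (hV : BddBelow (V '' Y)) (hc : 0 < c)
    (hdec : ∀ y ∈ Y, y ∉ S → V (φ y) + c ≤ V y) (hx : x ∈ Y) : ∃ n, φ^[n] x ∈ S := by
  by_contra! havoid
  have horbit : ∀ n, φ^[n] x ∈ Y := fun n ↦ hφ.iterate n hx
  refine not_bddBelow_range_of_succ_add_le (u := fun n ↦ V (φ^[n] x)) hc (fun n ↦ ?_)
    (hV.mono (range_subset_iff.mpr fun n ↦ mem_image_of_mem V (horbit n)))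
  rw [iterate_succ_apply']
  exact hdec _ (horbit n) (havoid n)

theorem frequently_iterate_mem_of_add_le (hφ : MapsTo φ Y Y) (hV : BddBelow (V '' Y)) (hc : 0 < c)
    (hdec : ∀ y ∈ Y, y ∉ S → V (φ y) + c ≤ V y) (hx : x ∈ Y) :
    ∃ᶠ n in atTop, φ^[n] x ∈ S := by
  refine frequently_atTop.mpr fun N ↦ ?_
  obtain ⟨n, hn⟩ := exists_iterate_mem_of_add_le hφ hV hc hdec (hφ.iterate N hx)
  exact ⟨n + N, N.le_add_left n, by rwa [iterate_add_apply]⟩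

end LyapunovDecrease

theorem orbit_visits_ball_infinitely_often_general {X : Type*} [PseudoMetricSpace X] {Y : Set X}
    {φ : X → X} (hφ : MapsTo φ Y Y) {z : X} {V : X → ℝ} (hV : BddBelow (V '' Y)) {r : ℝ}
    {α : ℝ → ℝ} (hα : MonotoneOn α (Ici r)) (hαr : 0 < α r)
    (hdec : ∀ x ∈ Y, r ≤ dist x z → V (φ x) ≤ V x - α (dist x z)) {x₀ : X} (hx₀ : x₀ ∈ Y) :
    ∃ᶠ n in Filter.atTop, φ^[n] x₀ ∈ Metric.ball z r := by
  refine frequently_iterate_mem_of_add_le hφ hV hαr (fun x hx hball ↦ ?_) hx₀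
  have hfar : r ≤ dist x z := not_lt.mp hball
  have hα_le : α r ≤ α (dist x z) := hα self_mem_Ici hfar hfar
  linarith [hdec x hx hfar]

/-- The orbit visits the open ball of radius `r` around `x_f` infinitely often. -/
theorem orbit_visits_ball_infinitely_often
    {E : Type*} [NormedAddCommGroup E] [NormedSpace ℝ E]
    (Y : Set E) (φ : E → E) (hφ : Set.MapsTo φ Y Y)
    (x_f : E) (hx_f : x_f ∈ Y) (V : E → ℝ)
    (r : ℝ) (hr : 0 < r)
    (α_V : ℝ → ℝ) (hαV0 : α_V 0 = 0)
    (hαVc : ContinuousOn α_V (Ici (0 : ℝ)))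
    (hαVm : StrictMonoOn α_V (Ici (0 : ℝ)))
    (hVnonneg : ∀ x ∈ Y, 0 ≤ V x)
    (hdec : ∀ x ∈ Y, r ≤ ‖x - x_f‖ → V (φ x) ≤ V x - α_V (‖x - x_f‖)) :
    ∀ x₀ ∈ Y, ∀ N : ℕ, ∃ n : ℕ, N ≤ n ∧ ‖φ^[n] x₀ - x_f‖ < r := by
  have hαr : 0 < α_V r := hαV0 ▸ hαVm self_mem_Ici hr.le hr
  simp only [← dist_eq_norm] at hdec ⊢
  exact fun x₀ hx₀ ↦ Filter.frequently_atTop.mp <|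
    orbit_visits_ball_infinitely_often_general hφ ⟨0, forall_mem_image.mpr hVnonneg⟩
      (hαVm.monotoneOn.mono (Ici_subset_Ici.mpr hr.le)) hαr hdec hx₀
end
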